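/- Let f : ℤ → ℕ ∪ {∞} be any function such that f⁻¹(0) is a finite set. Then there exist uncountably many asymptotic bases A of the integers such that r_A(n) = f(n) for all integers n and such that A(-x, x) ≫ x^{1/3} for all sufficiently large x, i.e., there is a constant c > 0 with A(-x, x) ≥ c·x^{1/3} for all sufficiently large x. -/

import Mathlib

/-- The representation function of a set `A` of integers:
`r_A(n) = card {(a,b) : a, b ∈ A, a ≤ b, a + b = n}`, valued in `ℕ∞`. -/
noncomputable def repFn (A : Set ℤ) (n : ℤ) : ℕ∞ :=
  {p : ℤ × ℤ | p.1 ∈ A ∧ p.2 ∈ A ∧ p.1 ≤ p.2 ∧ p.1 + p.2 = n}.encard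

/-- The counting function of a set `A` of integers:
`A(y, x) = card {a ∈ A : y ≤ a ≤ x}`. -/
noncomputable def countFn (A : Set ℤ) (y x : ℝ) : ℕ :=
  {a : ℤ | a ∈ A ∧ y ≤ (a : ℝ) ∧ (a : ℝ) ≤ x}.ncard

/-!
The set `A` is the union of an increasing sequence of finite sets `A₀ ⊆ A₁ ⊆ ⋯` with `r_{A_k} ≤ f`.
To raise `r_{A_k}(u)` by one, add to `A_k` a pair `b`, `u - b`. If there is no relation
`d b = j u + x + y + z` with `1 ≤ d ≤ 3`, `0 ≤ j ≤ 2` and `± x`, `± y`, `± z` among the relevant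
integers, then all the sums created, other than `u` itself, are pairwise distinct, were not sums
before and are not zeros of `f`, so that `r ≤ f` persists. There are `O(k)` relevant integers at
stage `k`, hence `O(k ^ 3)` forbidden values of `b`, and some `b = O(k ^ 3)` is allowed: this yields
the growth `x ^ (1 / 3)`.

Uncountability is a diagonal argument: given infinite sets `S₀, S₁, …`, stage `k` also promises
never to use some element of `S_k`, and so the limit `A` differs from every `S_k`.
-/

open Filter
open scoped Pointwise

section RepFn

variable {A : Set ℤ} {b c n : ℤ}

theorem repFn_mono {A B : Set ℤ} (h : A ⊆ B) (n : ℤ) : repFn A n ≤ repFn B n :=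
  Set.encard_le_encard fun _ ⟨h₁, h₂, h₃⟩ => ⟨h h₁, h h₂, h₃⟩

theorem repFn_eq_zero_iff : repFn A n = 0 ↔ n ∉ A + A := by
  rw [repFn, ← not_iff_not, not_not, ← ne_eq, Set.encard_ne_zero]
  constructor
  · rintro ⟨⟨x, y⟩, hx, hy, -, rfl⟩
    exact Set.add_mem_add hx hy
  · rintro ⟨x, hx, y, hy, rfl⟩
    rcases le_total x y with hxy | hyx
    · exact ⟨(x, y), hx, hy, hxy, rfl⟩
    · exact ⟨(y, x), hy, hx, hyx, add_comm y x⟩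

theorem repFn_insert_of_mem (hb : b ∉ A) (h : n - b ∈ insert b A) :
    repFn (insert b A) n = repFn A n + 1 := by
  have hnot : (min b (n - b), max b (n - b)) ∉
      {p : ℤ × ℤ | p.1 ∈ A ∧ p.2 ∈ A ∧ p.1 ≤ p.2 ∧ p.1 + p.2 = n} := by
    rintro ⟨hmin, hmax, -⟩
    grind
  rw [repFn, repFn, ← Set.encard_insert_of_notMem hnot]
  congr 1
  ext ⟨x, y⟩
  simp only [Set.mem_ofPred_eq, Set.mem_insert_iff, Prod.mk.injEq] at h ⊢
  grind

theorem repFn_insert_of_notMem (h : n - b ∉ insert b A) :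
    repFn (insert b A) n = repFn A n := by
  refine le_antisymm (Set.encard_le_encard ?_) (repFn_mono (Set.subset_insert b A) n)
  rintro ⟨x, y⟩ ⟨hx, hy, hxy, rfl⟩
  have hxb : x ≠ b := by rintro rfl; simp_all
  have hyb : y ≠ b := by rintro rfl; simp_all
  exact ⟨hx.resolve_left hxb, hy.resolve_left hyb, hxy, rfl⟩

theorem repFn_insert_insert_of_notMem (hn : n ≠ b + c) (hnb : n - b ∉ insert b A)
    (hnc : n - c ∉ insert c A) : repFn (insert b (insert c A)) n = repFn A n := by
  rw [repFn_insert_of_notMem, repFn_insert_of_notMem hnc]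
  grind

end RepFn

section DirectedUnion

variable {ι : Type*} [Nonempty ι]

theorem encard_iUnion_of_directed {α : Type*} {s : ι → Set α} (hs : Directed (· ⊆ ·) s) :
    (⋃ i, s i).encard = ⨆ i, (s i).encard := by
  refine le_antisymm (ENat.forall_natCast_le_iff_le.1 fun k hk => ?_)
    (iSup_le fun i => Set.encard_le_encard (Set.subset_iUnion s i))
  obtain ⟨t, ht, htk⟩ := Set.exists_subset_encard_eq hk
  lift t to Finset α using Set.finite_of_encard_eq_coe htk
  obtain ⟨i, hi⟩ := hs.exists_mem_subset_of_finset_subset_biUnion ht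
  exact htk ▸ (Set.encard_le_encard hi).trans (le_iSup (fun i => (s i).encard) i)

theorem repFn_iUnion_of_directed {A : ι → Set ℤ} (hA : Directed (· ⊆ ·) A) (n : ℤ) :
    repFn (⋃ i, A i) n = ⨆ i, repFn (A i) n := by
  unfold repFn
  rw [← encard_iUnion_of_directed]
  · congr 1
    ext ⟨x, y⟩
    simp only [Set.mem_ofPred_eq, Set.mem_iUnion]
    constructor
    · rintro ⟨⟨i, hi⟩, ⟨j, hj⟩, h⟩
      obtain ⟨k, hik, hjk⟩ := hA i j
      exact ⟨k, hik hi, hjk hj, h⟩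
    · rintro ⟨i, hi, hj, h⟩
      exact ⟨⟨i, hi⟩, ⟨i, hj⟩, h⟩
  · intro i j
    obtain ⟨k, hik, hjk⟩ := hA i j
    exact ⟨k, fun _ ⟨h₁, h₂, h₃⟩ => ⟨hik h₁, hik h₂, h₃⟩,
      fun _ ⟨h₁, h₂, h₃⟩ => ⟨hjk h₁, hjk h₂, h₃⟩⟩

end DirectedUnion

section Target

variable {f : ℤ → ℕ∞}

theorem exists_repFn_lt (hf : {n | f n = 0}.Finite) {A : Set ℤ} (hA : A.Finite) :
    ∃ u, repFn A u < f u := by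
  obtain ⟨u, hu⟩ := ((hA.add hA).union hf).exists_notMem
  rw [Set.mem_union, not_or] at hu
  exact ⟨u, (repFn_eq_zero_iff.2 hu.1).trans_lt (pos_iff_ne_zero.2 hu.2)⟩

theorem infinite_of_repFn_eq (hf : {n | f n = 0}.Finite) {A : Set ℤ} (hA : ∀ n, repFn A n = f n) :
    A.Infinite := fun hfin =>
  let ⟨u, hu⟩ := exists_repFn_lt hf hfin
  hu.ne (hA u)

theorem repFn_iUnion_eq_of_frequently {A : ℕ → Set ℤ} (hmono : Monotone A) {n : ℤ}
    (hle : ∀ k, repFn (A k) n ≤ f n)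
    (hlt : ∃ᶠ k in atTop, repFn (A k) n < f n → repFn (A k) n < repFn (A (k + 1)) n) :
    repFn (⋃ k, A k) n = f n := by
  rw [repFn_iUnion_of_directed hmono.directed_le]
  refine (iSup_le hle).antisymm (not_lt.1 fun hsup => ?_)
  obtain ⟨K, hK⟩ := ENat.exists_eq_iSup_of_lt_top hsup.ne_top.lt_top
  obtain ⟨k, hKk, hk⟩ := frequently_atTop.1 hlt K
  have hle_sup (j : ℕ) : repFn (A j) n ≤ ⨆ i, repFn (A i) n := le_iSup (fun i => repFn (A i) n) j
  have hk_lt : repFn (A k) n < repFn (A (k + 1)) n := hk ((hle_sup k).trans_lt hsup)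
  refine hk_lt.not_ge ?_
  calc repFn (A (k + 1)) n ≤ repFn (A K) n := hK ▸ hle_sup (k + 1)
    _ ≤ repFn (A k) n := repFn_mono (hmono hKk) n

end Target

/-- The pair `b`, `c` is fresh for `Q`: the sums of two elements of `Q ∪ {b, c}`, at least one of
which is `b` or `c`, are not sums of two elements of `Q`, and they are pairwise distinct. The sum
`b + c` is exempt from both requirements. -/
structure IsFresh (Q : Set ℤ) (b c : ℤ) : Prop where
  left_add_notMem : ∀ x ∈ insert b Q, b + x ∉ Q + Q
  right_add_notMem : ∀ x ∈ insert c Q, c + x ∉ Q + Q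
  left_add_ne_right_add : ∀ x ∈ insert b Q, ∀ y ∈ insert c Q, b + x ≠ c + y

namespace IsFresh

variable {A Q : Set ℤ} {b c n : ℤ}

theorem symm (h : IsFresh Q b c) : IsFresh Q c b :=
  ⟨h.right_add_notMem, h.left_add_notMem, fun x hx y hy => (h.left_add_ne_right_add y hy x hx).symm⟩

theorem mono (hAQ : A ⊆ Q) (h : IsFresh Q b c) : IsFresh A b c where
  left_add_notMem x hx := fun hs =>
    h.left_add_notMem x (Set.insert_subset_insert hAQ hx) (Set.add_subset_add hAQ hAQ hs)
  right_add_notMem x hx := fun hs =>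
    h.right_add_notMem x (Set.insert_subset_insert hAQ hx) (Set.add_subset_add hAQ hAQ hs)
  left_add_ne_right_add x hx y hy := h.left_add_ne_right_add x
    (Set.insert_subset_insert hAQ hx) y (Set.insert_subset_insert hAQ hy)

theorem left_notMem (h : IsFresh Q b c) : b ∉ Q := fun hb =>
  h.left_add_notMem b (Set.mem_insert b Q) (Set.add_mem_add hb hb)

theorem right_notMem (h : IsFresh Q b c) : c ∉ Q := h.symm.left_notMem

theorem ne (h : IsFresh Q b c) : b ≠ c := by
  rintro rfl
  exact h.left_add_ne_right_add b (Set.mem_insert b Q) b (Set.mem_insert b Q) rfl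

theorem left_notMem_insert (h : IsFresh Q b c) : b ∉ insert c Q := by
  rintro (hb | hb)
  exacts [h.ne hb, h.left_notMem hb]

theorem repFn_insert_insert_add (h : IsFresh A b c) :
    repFn (insert b (insert c A)) (b + c) = repFn A (b + c) + 1 := by
  rw [repFn_insert_of_mem h.left_notMem_insert (by simp), repFn_insert_of_notMem]
  simpa using h.left_notMem_insert

theorem repFn_insert_insert_le_one (h : IsFresh A b c) (hn : n ≠ b + c)
    (hnew : n - b ∈ insert b A ∨ n - c ∈ insert c A) : repFn (insert b (insert c A)) n ≤ 1 := by
  rcases hnew with hnb | hnc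
  · have hnc : n - c ∉ insert c A := fun hnc => h.left_add_ne_right_add _ hnb _ hnc (by ring)
    have hn0 : repFn A n = 0 :=
      repFn_eq_zero_iff.2 (by simpa using h.left_add_notMem _ hnb)
    rw [repFn_insert_of_mem h.left_notMem_insert, repFn_insert_of_notMem hnc, hn0, zero_add]
    grind
  · have hnb : n - b ∉ insert b A := fun hnb => h.left_add_ne_right_add _ hnb _ hnc (by ring)
    have hn0 : repFn A n = 0 :=
      repFn_eq_zero_iff.2 (by simpa using h.right_add_notMem _ hnc)
    rw [repFn_insert_of_notMem, repFn_insert_of_mem h.right_notMem hnc, hn0, zero_add]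
    grind

theorem repFn_insert_insert_le {f : ℤ → ℕ∞} (h : IsFresh Q b c) (hAQ : A ⊆ Q)
    (hf : ∀ n, f n = 0 → n ∈ Q + Q) (hle : ∀ n, repFn A n ≤ f n)
    (hlt : repFn A (b + c) < f (b + c)) (n : ℤ) : repFn (insert b (insert c A)) n ≤ f n := by
  rcases eq_or_ne n (b + c) with rfl | hn
  · rw [(h.mono hAQ).repFn_insert_insert_add]
    exact Order.add_one_le_of_lt hlt
  by_cases hnew : n - b ∈ insert b A ∨ n - c ∈ insert c A
  · have hnQ : n ∉ Q + Q := by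
      rcases hnew with hnb | hnc
      · simpa using h.left_add_notMem _ (Set.insert_subset_insert hAQ hnb)
      · simpa using h.right_add_notMem _ (Set.insert_subset_insert hAQ hnc)
    exact ((h.mono hAQ).repFn_insert_insert_le_one hn hnew).trans
      (Order.one_le_iff_ne_zero.2 (mt (hf n) hnQ))
  · rw [not_or] at hnew
    exact (repFn_insert_insert_of_notMem hn hnew.1 hnew.2).trans_le (hle n)

/-- Every coincidence of sums excluded by freshness has the form `d b = j u + x + y + z`. -/
theorem of_forall_mul_ne {u : ℤ} (h0 : 0 ∈ Q) (hneg : ∀ x ∈ Q, -x ∈ Q)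
    (h : ∀ d ∈ ({1, 2, 3} : Set ℤ), ∀ j ∈ ({0, 1, 2} : Set ℤ), ∀ x ∈ Q, ∀ y ∈ Q, ∀ z ∈ Q,
      d * b ≠ j * u + (x + y + z)) : IsFresh Q b (u - b) where
  left_add_notMem := by
    rintro x hx ⟨y, hy, z, hz, hyz : y + z = b + x⟩
    rcases hx with rfl | hx
    · exact h 2 (by simp) 0 (by simp) 0 h0 y hy z hz (by linarith)
    · exact h 1 (by simp) 0 (by simp) (-x) (hneg x hx) y hy z hz (by linarith)
  right_add_notMem := by
    rintro x hx ⟨y, hy, z, hz, hyz : y + z = u - b + x⟩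
    rcases hx with rfl | hx
    · exact h 2 (by simp) 2 (by simp) 0 h0 (-y) (hneg y hy) (-z) (hneg z hz) (by linarith)
    · exact h 1 (by simp) 1 (by simp) x hx (-y) (hneg y hy) (-z) (hneg z hz) (by linarith)
  left_add_ne_right_add := by
    rintro x hx y hy hxy
    rcases hx with rfl | hx <;> rcases hy with rfl | hy
    · exact h 2 (by simp) 1 (by simp) 0 h0 0 h0 0 h0 (by linarith)
    · exact h 3 (by simp) 1 (by simp) y hy 0 h0 0 h0 (by linarith)
    · exact h 3 (by simp) 2 (by simp) (-x) (hneg x hx) 0 h0 0 h0 (by linarith)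
    · exact h 2 (by simp) 1 (by simp) (-x) (hneg x hx) y hy 0 h0 (by linarith)

end IsFresh

theorem exists_mem_Icc_forall_mul_notMem {D T : Finset ℤ} (hD : 0 ∉ D) {N : ℕ}
    (hN : D.card * T.card < N) : ∃ b ∈ Finset.Icc (1 : ℤ) N, ∀ d ∈ D, d * b ∉ T := by
  have hcard : ((D ×ˢ T).image fun p => p.2 / p.1).card < (Finset.Icc (1 : ℤ) N).card := by
    calc _ ≤ (D ×ˢ T).card := Finset.card_image_le
      _ < N := by rwa [Finset.card_product]
      _ = (Finset.Icc (1 : ℤ) N).card := by simp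
  obtain ⟨b, hb, hbT⟩ := Finset.exists_mem_notMem_of_card_lt_card hcard
  refine ⟨b, hb, fun d hd hdb => hbT (Finset.mem_image.2 ⟨(d, d * b), ?_, ?_⟩)⟩
  · exact Finset.mk_mem_product hd hdb
  · exact Int.mul_ediv_cancel_left b (ne_of_mem_of_not_mem hd hD)

theorem exists_isFresh {Q : Finset ℤ} (h0 : 0 ∈ Q) (u : ℤ) :
    ∃ b : ℤ, |b| ≤ 73 * Q.card ^ 3 ∧ IsFresh (Q : Set ℤ) b (u - b) := by
  -- Three values of `d`, three of `j` and `(2 #Q) ^ 3` triples forbid at most `72 #Q ^ 3` values.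
  let R : Finset ℤ := Q ∪ -Q
  let T : Finset ℤ := ({0, 1, 2} : Finset ℤ).image (· * u) + (R + R + R)
  have hR : R.card ≤ 2 * Q.card := by
    calc R.card ≤ Q.card + (-Q).card := Finset.card_union_le _ _
      _ = 2 * Q.card := by rw [Finset.card_neg, two_mul]
  have hT : T.card ≤ 24 * Q.card ^ 3 := by
    calc T.card ≤ 3 * (R.card * R.card * R.card) :=
          Finset.card_add_le.trans <| Nat.mul_le_mul Finset.card_image_le <|
            Finset.card_add_le.trans <| Nat.mul_le_mul_right _ Finset.card_add_le
      _ ≤ 3 * (2 * Q.card * (2 * Q.card) * (2 * Q.card)) := by gcongr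
      _ = 24 * Q.card ^ 3 := by ring
  have hN : ({1, 2, 3} : Finset ℤ).card * T.card < 73 * Q.card ^ 3 := by
    have hQ : 0 < Q.card ^ 3 := pow_pos (Finset.card_pos.2 ⟨0, h0⟩) 3
    rw [show ({1, 2, 3} : Finset ℤ).card = 3 from rfl]
    omega
  obtain ⟨b, hb, hbT⟩ := exists_mem_Icc_forall_mul_notMem (by decide) hN
  rw [Finset.mem_Icc] at hb
  refine ⟨b, by rw [abs_of_pos (by lia)]; exact_mod_cast hb.2, ?_⟩
  refine IsFresh.mono (Q := (R : Set ℤ)) (by simp [R]) (.of_forall_mul_ne (by simp [R, h0]) ?_ ?_)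
  · intro x hx
    simpa [R, or_comm] using hx
  · intro d hd j hj x hx y hy z hz hdb
    refine hbT d (by simpa using hd) (hdb ▸ Finset.add_mem_add ?_ ?_)
    · exact Finset.mem_image_of_mem _ (by simpa using hj)
    · exact Finset.add_mem_add (Finset.add_mem_add hx hy) hz

/-- A stage of the greedy construction of a set with representation function `f`: the integers
chosen so far, and finitely many integers that are never to be chosen. -/
structure PartialBasis (f : ℤ → ℕ∞) where
  carrier : Finset ℤ
  avoid : Finset ℤ
  disjoint : Disjoint carrier avoid
  repFn_le : ∀ n, repFn carrier n ≤ f n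

namespace PartialBasis

variable {f : ℤ → ℕ∞}

instance : Preorder (PartialBasis f) := Preorder.lift fun p => (p.carrier, p.avoid)

instance : Inhabited (PartialBasis f) := ⟨∅, ∅, by simp, by simp [repFn]⟩

/-- The number of integers that a partial basis has decided about; it controls how large the next
element has to be. -/
def size (p : PartialBasis f) : ℕ := p.carrier.card + p.avoid.card

theorem exists_avoid (p : PartialBasis f) {S : Set ℤ} (hS : S.Infinite) :
    ∃ q ≥ p, q.carrier = p.carrier ∧ q.size ≤ p.size + 1 ∧ ∃ s ∈ S, s ∈ q.avoid := by
  obtain ⟨s, hsS, hsp⟩ := hS.exists_notMem_finset p.carrier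
  let q : PartialBasis f := ⟨p.carrier, insert s p.avoid,
    Finset.disjoint_insert_right.2 ⟨hsp, p.disjoint⟩, p.repFn_le⟩
  have hsize : q.size ≤ p.size + 1 := by
    have := Finset.card_insert_le s p.avoid
    simp only [size, q]
    omega
  exact ⟨q, ⟨subset_rfl, Finset.subset_insert _ _⟩, rfl, hsize, s, hsS, Finset.mem_insert_self _ _⟩

theorem exists_repFn_lt_repFn (p : PartialBasis f) (hf : {n | f n = 0}.Finite) {u : ℤ}
    (hu : repFn p.carrier u < f u) :
    ∃ q ≥ p, q.size ≤ p.size + 2 ∧ repFn p.carrier u < repFn q.carrier u ∧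
      ∃ b ∈ q.carrier, b ∉ p.carrier ∧ |b| ≤ 73 * (p.size + {n | f n = 0}.ncard + 1) ^ 3 := by
  let Q : Finset ℤ := insert 0 (p.carrier ∪ p.avoid ∪ hf.toFinset)
  have hQcard : Q.card ≤ p.size + {n | f n = 0}.ncard + 1 := by
    rw [Set.ncard_eq_toFinset_card _ hf]
    exact (Finset.card_insert_le _ _).trans <| Nat.add_le_add_right
      ((Finset.card_union_le _ _).trans <| Nat.add_le_add_right (Finset.card_union_le _ _) _) 1
  have hQ0 : (0 : ℤ) ∈ Q := Finset.mem_insert_self _ _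
  have hcarrier : (p.carrier : Set ℤ) ⊆ Q := fun x hx => by simp_all [Q]
  have havoid : p.avoid ⊆ Q := fun x hx => by simp [Q, hx]
  have hzero (n : ℤ) (hn : f n = 0) : n ∈ (Q + Q : Set ℤ) :=
    ⟨n, by simp [Q, hn], 0, by simp [Q], add_zero n⟩
  obtain ⟨b, hbound, hb⟩ := exists_isFresh hQ0 u
  have hsum : b + (u - b) = u := add_sub_cancel b u
  have hdisj : Disjoint (insert b (insert (u - b) p.carrier)) p.avoid := by
    rw [Finset.disjoint_insert_left, Finset.disjoint_insert_left]
    exact ⟨mt (@havoid b) hb.left_notMem, mt (@havoid (u - b)) hb.right_notMem, p.disjoint⟩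
  let q : PartialBasis f := ⟨insert b (insert (u - b) p.carrier), p.avoid, hdisj, by
    push_cast
    exact hb.repFn_insert_insert_le hcarrier hzero p.repFn_le (hsum.symm ▸ hu)⟩
  have hsize : q.size ≤ p.size + 2 := by
    have := Finset.card_insert_le b (insert (u - b) p.carrier)
    have := Finset.card_insert_le (u - b) p.carrier
    simp only [size, q]
    omega
  have hrep : repFn q.carrier u = repFn p.carrier u + 1 := by
    simpa [q, hsum] using (hb.mono hcarrier).repFn_insert_insert_add
  refine ⟨q, ⟨?_, subset_rfl⟩, hsize, ?_, b, Finset.mem_insert_self _ _,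
    fun h => hb.left_notMem (hcarrier h), hbound.trans ?_⟩
  · exact (Finset.subset_insert _ _).trans (Finset.subset_insert _ _)
  · exact hrep ▸ (ENat.lt_add_one_iff hu.ne_top).2 le_rfl
  · have : (Q.card : ℤ) ≤ p.size + {n | f n = 0}.ncard + 1 := by exact_mod_cast hQcard
    gcongr

/-- One step of the greedy construction, from `p` to `q`: it makes progress at `m` if the number of
representations of `m` is still too small, and it excludes some element of `S`. -/
structure IsStep (p q : PartialBasis f) (m : ℤ) (S : Set ℤ) : Prop where
  le : p ≤ q
  size_le : q.size ≤ p.size + 3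
  repFn_lt : repFn p.carrier m < f m → repFn p.carrier m < repFn q.carrier m
  exists_mem_avoid : ∃ s ∈ S, s ∈ q.avoid
  exists_new : ∃ b ∈ q.carrier, b ∉ p.carrier ∧ |b| ≤ 73 * (p.size + {n | f n = 0}.ncard + 2) ^ 3

theorem exists_isStep (p : PartialBasis f) (hf : {n | f n = 0}.Finite) (m : ℤ) {S : Set ℤ}
    (hS : S.Infinite) : ∃ q, p.IsStep q m S := by
  obtain ⟨u, hu, hum⟩ : ∃ u, repFn p.carrier u < f u ∧ (repFn p.carrier m < f m → u = m) := by
    by_cases hm : repFn p.carrier m < f m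
    · exact ⟨m, hm, fun _ => rfl⟩
    · obtain ⟨u, hu⟩ := exists_repFn_lt hf p.carrier.finite_toSet
      exact ⟨u, hu, fun h => absurd h hm⟩
  obtain ⟨p', hpp', hcarrier, hsize', s, hsS, hs⟩ := p.exists_avoid hS
  obtain ⟨q, hp'q, hsize, hlt, b, hbq, hbp, hb⟩ := p'.exists_repFn_lt_repFn hf (hcarrier ▸ hu)
  rw [hcarrier] at hlt hbp
  refine ⟨q, hpp'.trans hp'q, by omega, fun h => hum h ▸ hlt, ⟨s, hsS, hp'q.2 hs⟩,
    b, hbq, hbp, hb.trans ?_⟩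
  have : (p'.size : ℤ) ≤ p.size + 1 := by exact_mod_cast hsize'
  gcongr 73 * ?_ ^ 3
  linarith

theorem exists_seq_isStep (hf : {n | f n = 0}.Finite) (m : ℕ → ℤ) {S : ℕ → Set ℤ}
    (hS : ∀ k, (S k).Infinite) :
    ∃ p : ℕ → PartialBasis f, (p 0).size = 0 ∧ ∀ k, (p k).IsStep (p (k + 1)) (m k) (S k) := by
  choose next hnext using fun k (p : PartialBasis f) => p.exists_isStep hf (m k) (hS k)
  exact ⟨fun k => Nat.rec default next k, rfl, fun k => hnext k _⟩

end PartialBasis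

section Growth

/-- The set `A` has at least a constant times `x ^ e` elements in `[-x, x]`, for all large `x`. -/
def HasGrowth (A : Set ℤ) (e : ℝ) : Prop :=
  ∃ c : ℝ, 0 < c ∧ ∃ x₀ : ℝ, ∀ x : ℝ, x₀ ≤ x → c * x ^ e ≤ (countFn A (-x) x : ℝ)

variable {A : Set ℤ} {b : ℕ → ℤ}

theorem le_countFn_of_injective (hb : b.Injective) (hA : ∀ i, b i ∈ A) {k : ℕ} {x : ℝ}
    (h : ∀ i < k, |(b i : ℝ)| ≤ x) : k ≤ countFn A (-x) x := by
  have hfin : {a : ℤ | a ∈ A ∧ -x ≤ (a : ℝ) ∧ (a : ℝ) ≤ x}.Finite :=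
    (Set.finite_Icc ⌈-x⌉ ⌊x⌋).subset fun a ha => ⟨Int.ceil_le.2 ha.2.1, Int.le_floor.2 ha.2.2⟩
  calc k = (b '' Set.Iio k).ncard := by simp [Set.ncard_image_of_injective _ hb]
    _ ≤ countFn A (-x) x := Set.ncard_le_ncard (Set.image_subset_iff.2 fun i hi =>
      ⟨hA i, abs_le.1 (h i hi)⟩) hfin

theorem hasGrowth_of_injective (hb : b.Injective) (hA : ∀ i, b i ∈ A) {C : ℝ} (hC : 0 < C) {d : ℕ}
    (hd : d ≠ 0) (h : ∀ i, |(b i : ℝ)| ≤ C * (i + 1) ^ d) : HasGrowth A (1 / d) := by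
  refine ⟨C⁻¹ ^ (1 / d : ℝ) / 2, by positivity, C, fun x hx => ?_⟩
  have hx0 : 0 < x := hC.trans_le hx
  let y : ℝ := (x / C) ^ (1 / d : ℝ)
  have hy_pow : C * y ^ d = x := by
    simp only [y, one_div]
    rw [Real.rpow_inv_natCast_pow (by positivity) hd, mul_div_cancel₀ x hC.ne']
  have hy_one : 1 ≤ y := Real.one_le_rpow ((one_le_div hC).2 hx) (by positivity)
  have hfloor : (⌊y⌋₊ : ℝ) ≤ countFn A (-x) x := by
    refine mod_cast le_countFn_of_injective hb hA fun i hi => ?_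
    have hiy : (i + 1 : ℝ) ≤ y := mod_cast (Nat.le_floor_iff' i.succ_ne_zero).1 hi
    calc |(b i : ℝ)| ≤ C * (i + 1) ^ d := h i
      _ ≤ C * y ^ d := by gcongr
      _ = x := hy_pow
  calc C⁻¹ ^ (1 / d : ℝ) / 2 * x ^ (1 / d : ℝ) = y / 2 := by
        simp only [y]
        rw [div_eq_inv_mul x, Real.mul_rpow (by positivity) hx0.le]
        ring
    _ ≤ ⌊y⌋₊ := by
        have := Nat.lt_floor_add_one y
        have : (1 : ℝ) ≤ ⌊y⌋₊ := mod_cast (Nat.one_le_floor_iff y).2 hy_one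
        linarith
    _ ≤ countFn A (-x) x := hfloor

end Growth

theorem exists_seq_forall_frequently_eq (α : Type*) [Countable α] [Nonempty α] :
    ∃ t : ℕ → α, ∀ a, ∃ᶠ k in atTop, t k = a := by
  obtain ⟨g, hg⟩ := exists_surjective_nat α
  refine ⟨fun k => g k.unpair.1, fun a => frequently_atTop.2 fun N => ?_⟩
  obtain ⟨i, rfl⟩ := hg a
  exact ⟨Nat.pair i N, Nat.right_le_pair i N, by simp⟩

theorem injective_of_mem_succ_of_notMem {α : Type*} {A : ℕ → Set α} (hA : Monotone A) {b : ℕ → α}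
    (hmem : ∀ k, b k ∈ A (k + 1)) (hnotMem : ∀ k, b k ∉ A k) : b.Injective :=
  .of_lt_imp_ne fun i j hij hbij => hnotMem j (hA hij (hbij ▸ hmem i))

theorem exists_repFn_eq_hasGrowth_not_subset {f : ℤ → ℕ∞} (hf : {n | f n = 0}.Finite)
    {S : ℕ → Set ℤ} (hS : ∀ k, (S k).Infinite) :
    ∃ A : Set ℤ, (∀ n, repFn A n = f n) ∧ HasGrowth A (1 / 3) ∧ ∀ k, ¬ S k ⊆ A := by
  obtain ⟨m, hm⟩ := exists_seq_forall_frequently_eq ℤ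
  obtain ⟨p, hp0, hp⟩ := PartialBasis.exists_seq_isStep hf m hS
  have hmono : Monotone p := monotone_nat_of_le_succ fun k => (hp k).le
  let A (k : ℕ) : Set ℤ := (p k).carrier
  have hA : Monotone A := fun i j hij => Finset.coe_subset.2 (hmono hij).1
  have hsize (k : ℕ) : (p k).size ≤ 3 * k := by
    induction k with
    | zero => exact hp0.le
    | succ k ih => have := (hp k).size_le; omega
  refine ⟨⋃ k, A k, fun n => ?_, ?_, fun k hk => ?_⟩
  · refine repFn_iUnion_eq_of_frequently hA (fun k => (p k).repFn_le n) ((hm n).mono fun k hk => ?_)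
    exact hk ▸ (hp k).repFn_lt
  · choose b hb_mem hb_notMem hb_le using fun k => (hp k).exists_new
    let z : ℕ := {n | f n = 0}.ncard
    have hgrowth := hasGrowth_of_injective (injective_of_mem_succ_of_notMem hA hb_mem hb_notMem)
      (fun k => Set.mem_iUnion_of_mem (s := A) (k + 1) (hb_mem k)) (C := 73 * (z + 3) ^ 3) (d := 3)
      (by positivity) three_ne_zero fun k => ?_
    · exact_mod_cast hgrowth
    have hsizek : ((p k).size : ℝ) ≤ 3 * k := mod_cast hsize k
    calc |(b k : ℝ)| ≤ 73 * ((p k).size + z + 2) ^ 3 := mod_cast hb_le k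
      _ ≤ 73 * ((z + 3) * (k + 1)) ^ 3 := by
        gcongr
        nlinarith [mul_nonneg z.cast_nonneg k.cast_nonneg (α := ℝ)]
      _ = 73 * (z + 3) ^ 3 * (k + 1) ^ 3 := by ring
  · obtain ⟨s, hsS, hs⟩ := (hp k).exists_mem_avoid
    obtain ⟨j, hj⟩ := Set.mem_iUnion.1 (hk hsS)
    exact Finset.disjoint_left.1 (p (max j (k + 1))).disjoint (hA (le_max_left _ _) hj)
      ((hmono (le_max_right _ _)).2 hs)

theorem stmt_6 (f : ℤ → ℕ∞) (hf : {n : ℤ | f n = 0}.Finite) :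
    ¬ {A : Set ℤ |
        {n : ℤ | ¬ 1 ≤ repFn A n}.Finite ∧
        (∀ n : ℤ, repFn A n = f n) ∧
        (∃ c : ℝ, 0 < c ∧ ∃ x₀ : ℝ, ∀ x : ℝ, x₀ ≤ x →
          c * x ^ ((1 : ℝ) / 3) ≤ (countFn A (-x) x : ℝ))}.Countable := by
  intro hcount
  have hbasis {A : Set ℤ} (hA : ∀ n, repFn A n = f n) : {n | ¬ 1 ≤ repFn A n}.Finite := by
    simpa only [hA, Order.one_le_iff_ne_zero, not_not] using hf
  obtain ⟨A₀, hA₀, hgrowth₀, -⟩ :=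
    exists_repFn_eq_hasGrowth_not_subset hf fun _ : ℕ => Set.infinite_univ
  obtain ⟨S, hS⟩ := hcount.exists_eq_range ⟨A₀, hbasis hA₀, hA₀, hgrowth₀⟩
  have hSinf (k : ℕ) : (S k).Infinite :=
    infinite_of_repFn_eq hf (hS.ge (Set.mem_range_self k)).2.1
  obtain ⟨A, hA, hgrowth, hSA⟩ := exists_repFn_eq_hasGrowth_not_subset hf hSinf
  obtain ⟨k, hk⟩ := hS.le ⟨hbasis hA, hA, hgrowth⟩
  exact hSA k hk.le
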